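/- Let ρ ≥ 0, let Λ ⊂ ℝ³ be a bounded open set, and let Ω ⊂ Λ be a Borel set of finite perimeter with |Ω| > 0 such that 𝓔_Λ[ρ,Ω] ≤ μ*|Ω|. Then |Ω| ≤ 8 + 16π ρ diam(Λ)³. -/

import Mathlib

open MeasureTheory Metric Set Filter Bornology
open scoped Topology ENNReal NNReal Pointwise

noncomputable section

/-- Three-dimensional Euclidean space. -/
abbrev E3 : Type := EuclideanSpace ℝ (Fin 3)

/-- The divergence of a vector field on `E3`, defined as the trace of its derivative. -/
def divg (φ : E3 → E3) (x : E3) : ℝ :=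
  LinearMap.trace ℝ E3 (fderiv ℝ φ x : E3 →ₗ[ℝ] E3)

/-- The candidate values `∫_Ω div φ` over `C¹` compactly supported vector fields bounded by one. -/
def perCand (Ω : Set E3) : Set ℝ :=
  {a : ℝ | ∃ φ : E3 → E3, ContDiff ℝ 1 φ ∧ HasCompactSupport φ ∧
      (∀ x, ‖φ x‖ ≤ 1) ∧ a = ∫ x in Ω, divg φ x}

/-- The perimeter of a set, in the sense of geometric measure theory. -/
def per (Ω : Set E3) : ℝ := sSup (perCand Ω)

/-- A set has finite perimeter if the family of integrals defining the perimeter is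
bounded above. -/
def HasFinPer (Ω : Set E3) : Prop := BddAbove (perCand Ω)

/-- The Lebesgue volume of a set as a real number. -/
def vol (Ω : Set E3) : ℝ := (volume Ω).toReal

/-- The liquid drop energy `𝓔_Λ[ρ,Ω]`. -/
def ldEnergy (Λ : Set E3) (ρ : ℝ) (Ω : Set E3) : ℝ :=
  per Ω + (1/2) * ∫ x, ∫ y,
    (Set.indicator Ω (fun _ => (1:ℝ)) x - ρ * Set.indicator Λ (fun _ => (1:ℝ)) x) *
      (Set.indicator Ω (fun _ => (1:ℝ)) y - ρ * Set.indicator Λ (fun _ => (1:ℝ)) y) / ‖x - y‖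

/-- The neutral ground state energy `E_Λ(ρ)`. -/
def EE (Λ : Set E3) (ρ : ℝ) : ℝ :=
  sInf {t : ℝ | ∃ Ω : Set E3, MeasurableSet Ω ∧ Ω ⊆ Λ ∧ HasFinPer Ω ∧
    vol Ω = ρ * vol Λ ∧ t = ldEnergy Λ ρ Ω}

/-- The liquid drop energy `I[Ω]` of an isolated droplet (no background). -/
def II (Ω : Set E3) : ℝ :=
  per Ω + (1/2) * ∫ x in Ω, ∫ y in Ω, 1 / ‖x - y‖

/-- `μ* = inf I[Ω]/|Ω|`. -/
def muStar : ℝ :=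
  sInf {t : ℝ | ∃ Ω : Set E3, MeasurableSet Ω ∧ HasFinPer Ω ∧
    0 < volume Ω ∧ volume Ω < ⊤ ∧ t = II Ω / vol Ω}

/-- A minimizer for the isolated liquid drop problem. -/
def IsMinimizer (Ω : Set E3) : Prop :=
  MeasurableSet Ω ∧ HasFinPer Ω ∧ 0 < volume Ω ∧ volume Ω < ⊤ ∧ II Ω = muStar * vol Ω

/-- The set of masses of minimizers. -/
def minimizerMasses : Set ℝ := {m : ℝ | ∃ Ω : Set E3, IsMinimizer Ω ∧ m = vol Ω}

/-- The largest mass of a minimizer. -/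
def mStar : ℝ := sSup minimizerMasses

/-- The smallest mass of a minimizer. -/
def mStarStar : ℝ := sInf minimizerMasses

/-- `Λ` is an `(r,L)`-Lipschitz open set: near each boundary point it is, in a suitable
orthonormal coordinate system, the epigraph of an `L`-Lipschitz function. -/
def IsLipschitzDomain (r L : ℝ) (Λ : Set E3) : Prop :=
  ∀ x ∈ frontier Λ, ∃ (g : E3 ≃ᵢ E3) (f : ℝ × ℝ → ℝ),
    LipschitzWith L.toNNReal f ∧
    Λ ∩ ball x r = {y ∈ ball x r | f (g y 0, g y 1) < g y 2}

/-- Fisher regularity of the boundary. -/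
def FisherCond (C ℓ : ℝ) (Λ : Set E3) : Prop :=
  ∀ h : ℝ, 0 < h → h ≤ ℓ → (volume (frontier Λ + ball (0:E3) h)).toReal ≤ C * ℓ^2 * h

/-- An admissible sequence of domains for the thermodynamic limit. -/
def IsAdmissibleSeq (r L C : ℝ) (Λs : ℕ → Set E3) (ℓ : ℕ → ℝ) : Prop :=
  Tendsto ℓ atTop atTop ∧
  ∀ n : ℕ, IsOpen (Λs n) ∧ IsBounded (Λs n) ∧ IsLipschitzDomain r L (Λs n) ∧
    ball 0 (ℓ n / C) ⊆ Λs n ∧ Λs n ⊆ ball 0 (ℓ n) ∧ FisherCond C (ℓ n) (Λs n)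

/-- `e` is the thermodynamic limit function of the liquid drop model. -/
def IsThermoLimit (e : ℝ → ℝ) : Prop :=
  ∀ ρ : ℝ, 0 ≤ ρ → ρ ≤ 1 →
    ∀ (r L C : ℝ) (Λs : ℕ → Set E3) (ℓ : ℕ → ℝ), 0 < r → 0 < L → 0 < C →
      IsAdmissibleSeq r L C Λs ℓ →
      Tendsto (fun n => EE (Λs n) ρ / vol (Λs n)) atTop (𝓝 (e ρ))

/-- The domain for the `N`-particle Jellium problem: `N^{1/3} Λ₁` with `Λ₁` the ball of
unit volume centered at the origin. -/
def jelDomain (N : ℕ) : Set E3 :=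
  ball (0:E3) ((N : ℝ) ^ ((1:ℝ)/3) * (3 / (4 * Real.pi)) ^ ((1:ℝ)/3))

/-- The `N`-particle Jellium ground state energy. -/
def jelN (N : ℕ) : ℝ :=
  sInf {t : ℝ | ∃ x : Fin N → E3, (∀ j, x j ∈ jelDomain N) ∧
    t = (∑ j : Fin N, ∑ k : Fin N, if j < k then 1 / ‖x j - x k‖ else 0)
      - (∑ j : Fin N, ∫ y in jelDomain N, 1 / ‖x j - y‖)
      + (1/2) * ∫ x' in jelDomain N, ∫ y in jelDomain N, 1 / ‖x' - y‖}

/-- `eJ` is the Jellium energy per particle in the thermodynamic limit. -/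
def IsJelliumLimit (eJ : ℝ) : Prop :=
  Tendsto (fun N : ℕ => jelN N / (N : ℝ)) atTop (𝓝 eJ)

/-- The grand-canonical liquid drop energy `F_Λ(ρ)`. -/
def FF (Λ : Set E3) (ρ : ℝ) : ℝ :=
  sInf {t : ℝ | ∃ Ω : Set E3, MeasurableSet Ω ∧ Ω ⊆ Λ ∧ HasFinPer Ω ∧
    t = ldEnergy Λ ρ Ω - muStar * vol Ω}

/-- A tetrahedron: the interior of the convex hull of four affinely independent points. -/
def IsTetra (Δ : Set E3) : Prop :=
  ∃ v : Fin 4 → E3, AffineIndependent ℝ v ∧ Δ = interior (convexHull ℝ (Set.range v))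

/-- The open cube `(-L/2, L/2)³`. -/
def cubeL (Lside : ℝ) : Set E3 := {x : E3 | ∀ i, |x i| < Lside / 2}

/-- The grand-canonical Jellium energy of point particles of charge `m` in the domain `S`
with a uniform background of density one. -/
def pointJellium (m : ℝ) (S : Set E3) : ℝ :=
  sInf {t : ℝ | ∃ (n : ℕ) (x : Fin n → E3), (∀ j, x j ∈ S) ∧
    t = (∑ j : Fin n, ∑ k : Fin n, if j < k then m^2 / ‖x j - x k‖ else 0)
      - m * (∑ j : Fin n, ∫ y in S, 1 / ‖x j - y‖)
      + (1/2) * ∫ x' in S, ∫ y in S, 1 / ‖x' - y‖}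

/-- The conclusions of the decomposition theorem for minimizing sequences. -/
def IsDecomp (Ω : ℕ → Set E3) (m : ℝ) (K : ℕ) (Ωs : Fin K → Set E3)
    (a : ℕ → Fin K → E3) (R : ℝ) (φ : ℕ → ℕ) : Prop :=
  StrictMono φ ∧ 0 < R ∧
  (∀ j k : Fin K, j ≠ k → Tendsto (fun n => ‖a n j - a n k‖) atTop atTop) ∧
  (∀ j, IsMinimizer (Ωs j)) ∧
  (∀ j, mStarStar ≤ vol (Ωs j) ∧ vol (Ωs j) ≤ mStar) ∧
  (∀ j, Tendsto
    (fun n => volume (symmDiff ({x : E3 | x + a n j ∈ Ω (φ n)} ∩ ball (0:E3) R) (Ωs j)))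
    atTop (𝓝 0)) ∧
  Tendsto (fun n => volume (Ω (φ n) \ ⋃ j, ball (a n j) R)) atTop (𝓝 0) ∧
  Tendsto (fun n => per (Ω (φ n) \ ⋃ j, ball (a n j) R)) atTop (𝓝 0) ∧
  m = ∑ j, vol (Ωs j) ∧
  (2 ≤ K → ∃ ε : ℕ → ℝ, Tendsto ε atTop (𝓝 0) ∧ ∀ n : ℕ,
    muStar * vol (Ω (φ n)) +
      (∑ j : Fin K, ∑ k : Fin K,
        if j < k then (vol (Ωs j) * vol (Ωs k) + ε n) / ‖a n j - a n k‖ else 0)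
      ≤ II (Ω (φ n)))

instance : MeasurableSpace (Matrix (Fin 3) (Fin 3) ℝ) :=
  (inferInstance : MeasurableSpace (Fin 3 → Fin 3 → ℝ))

/-- The rotation group SO(3), as a set of matrices. -/
def SO3 : Set (Matrix (Fin 3) (Fin 3) ℝ) := {R | R * R.transpose = 1 ∧ R.det = 1}

/-- The action of a matrix on Euclidean space. -/
def rot (R : Matrix (Fin 3) (Fin 3) ℝ) (x : E3) : E3 :=
  (EuclideanSpace.equiv (Fin 3) ℝ).symm (R.mulVec (EuclideanSpace.equiv (Fin 3) ℝ x))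

/-- The image of a set under the rigid motion `x ↦ Rx + τ`. -/
def rigidImage (R : Matrix (Fin 3) (Fin 3) ℝ) (τ : E3) (S : Set E3) : Set E3 :=
  (fun x => rot R x + τ) '' S

/-- `μ` is the normalized Haar measure of SO(3): a probability measure concentrated on SO(3)
which is invariant under left multiplication by rotations. -/
def IsHaarSO3 (μ : Measure (Matrix (Fin 3) (Fin 3) ℝ)) : Prop :=
  IsProbabilityMeasure μ ∧ μ SO3ᶜ = 0 ∧ ∀ S ∈ SO3, Measure.map (fun R => S * R) μ = μ

/-- The cube of the tiling of side length `ε` indexed by `z ∈ ℤ³`. -/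
def cubeZ (ε : ℝ) (z : Fin 3 → ℤ) : Set E3 := {x : E3 | ∀ i, |x i - ε * (z i : ℝ)| < ε / 2}

/-- The distance between two sets. -/
def setDist (s t : Set E3) : ℝ := sInf {d : ℝ | ∃ p ∈ s, ∃ q ∈ t, d = dist p q}

/-- The outer cubic boundary layer of `Λ` at scale `ε`. -/
def outerLayer (Λ : Set E3) (ε : ℝ) : Set E3 :=
  ⋃ z ∈ {z : Fin 3 → ℤ | setDist (cubeZ ε z) (frontier Λ) ≤ ε}, closure (cubeZ ε z \ Λ)

lemma exists_cutoff (l ε : ℝ) (hε : 0 < ε) : ∃ η η' : ℝ → ℝ,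
    (∀ t, HasDerivAt η (η' t) t) ∧ Continuous η' ∧ (∀ t, 0 ≤ η t ∧ η t ≤ 1) ∧
    (∀ t, t ≤ l → η t = 0) ∧ (∀ t, l + ε + ε^2 ≤ t → η t = 1) ∧
    (∀ t, 0 ≤ η' t ∧ η' t ≤ 1/ε) ∧ (∀ t, t ≤ l → η' t = 0) ∧
    (∀ t, l + ε + ε^2 ≤ t → η' t = 0) := by
  set c : ℝ → ℝ := fun s => max 0 (min 1 ((s - l)/ε)) with hc
  have hcc : Continuous c := by fun_prop
  have c0 : ∀ s, 0 ≤ c s := fun s => le_max_left _ _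
  have c1 : ∀ s, c s ≤ 1 := fun s => max_le zero_le_one (min_le_left _ _)
  have cz : ∀ s, s ≤ l → c s = 0 := by
    intro s hs
    have : (s - l)/ε ≤ 0 := div_nonpos_of_nonpos_of_nonneg (by linarith) hε.le
    exact max_eq_left ((min_le_right _ _).trans this)
  have co : ∀ s, l + ε ≤ s → c s = 1 := by
    intro s hs
    have : 1 ≤ (s - l)/ε := by rw [le_div_iff₀ hε]; linarith
    simp [hc, min_eq_left this]
  have cm : Monotone c := by
    intro a b hab
    have : (a - l)/ε ≤ (b - l)/ε := by gcongr
    exact max_le_max le_rfl (min_le_min le_rfl this)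
  have cL : ∀ t, c t - c (t - ε^2) ≤ ε := by
    intro t
    have h : (t - ε^2 - l)/ε = (t-l)/ε - ε := by field_simp; ring
    simp only [hc, h]
    rcases le_total 0 ((t-l)/ε) with h1 | h1 <;> rcases le_total 1 ((t-l)/ε) with h2 | h2 <;>
    rcases le_total 0 ((t-l)/ε - ε) with h3 | h3 <;> rcases le_total 1 ((t-l)/ε - ε) with h4 | h4 <;>
    simp only [max_def, min_def] <;> split_ifs <;> linarith
  set F : ℝ → ℝ := fun t => ∫ s in (0:ℝ)..t, c s with hF
  have hFd : ∀ t, HasDerivAt F (c t) t := fun t => (hcc.integral_hasStrictDerivAt 0 t).hasDerivAt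
  have hdiff : ∀ t, F t - F (t - ε^2) = ∫ s in (t - ε^2)..t, c s := by
    intro t
    exact intervalIntegral.integral_interval_sub_left (hcc.intervalIntegrable _ _)
      (hcc.intervalIntegrable _ _)
  have e2 : 0 < ε^2 := by positivity
  refine ⟨fun t => (F t - F (t - ε^2))/ε^2, fun t => (c t - c (t - ε^2))/ε^2, ?_, ?_, ?_, ?_, ?_, ?_, ?_, ?_⟩
  · intro t
    have h2 : HasDerivAt (fun t => F (t - ε^2)) (c (t - ε^2)) t := (hFd (t - ε^2)).comp_sub_const t (ε^2)
    exact ((hFd t).sub h2).div_const _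
  · fun_prop
  · intro t
    simp only [hdiff]
    constructor
    · apply div_nonneg _ e2.le
      exact intervalIntegral.integral_nonneg (by linarith) (fun s _ => c0 s)
    · rw [div_le_one e2]
      have := intervalIntegral.integral_mono (μ := volume) (a := t - ε^2) (b := t) (by linarith)
        (hcc.intervalIntegrable _ _) (continuous_const.intervalIntegrable _ _) c1
      simpa using this
  · intro t ht
    simp only [hdiff]
    rw [intervalIntegral.integral_congr (g := fun _ => 0)]
    · simp
    · intro s hs
      rw [uIcc_of_le (by linarith)] at hs
      exact cz s (hs.2.trans ht)
  · intro t ht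
    simp only [hdiff]
    rw [intervalIntegral.integral_congr (g := fun _ => 1)]
    · simp [hε.ne']
    · intro s hs
      rw [uIcc_of_le (by linarith)] at hs
      exact co s (by linarith [hs.1])
  · intro t
    constructor
    · apply div_nonneg _ e2.le
      linarith [cm (show t - ε^2 ≤ t by linarith)]
    · rw [div_le_div_iff₀ e2 hε]
      nlinarith [cL t]
  · intro t ht
    simp only []
    rw [cz t ht, cz _ (by linarith)]; simp
  · intro t ht
    simp only []
    rw [co t (by linarith), co _ (by linarith)]; simp

lemma divg_continuous {φ : E3 → E3} (h : ContDiff ℝ 1 φ) : Continuous (divg φ) := by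
  have h1 : Continuous (fderiv ℝ φ) := h.continuous_fderiv (by norm_num)
  have h2 : Continuous (fun L : E3 →L[ℝ] E3 => LinearMap.trace ℝ E3 (L : E3 →ₗ[ℝ] E3)) := by
    have := LinearMap.continuous_of_finiteDimensional
      ((LinearMap.trace ℝ E3).comp (ContinuousLinearMap.coeLM ℝ : (E3 →L[ℝ] E3) →ₗ[ℝ] (E3 →ₗ[ℝ] E3)))
    exact this
  exact h2.comp h1

lemma divg_compact {φ : E3 → E3} (h : HasCompactSupport φ) : HasCompactSupport (divg φ) := by
  have h1 : HasCompactSupport (fderiv ℝ φ) := h.fderiv (𝕜 := ℝ)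
  exact h1.comp_left (g := fun L : E3 →L[ℝ] E3 => LinearMap.trace ℝ E3 (L : E3 →ₗ[ℝ] E3)) (by simp)

lemma divg_integrable {φ : E3 → E3} (h : ContDiff ℝ 1 φ) (hc : HasCompactSupport φ) :
    Integrable (divg φ) := (divg_continuous h).integrable_of_hasCompactSupport (divg_compact hc)

lemma divg_glue {φ ψ : E3 → E3} (hφ : ContDiff ℝ 1 φ) (hψ : ContDiff ℝ 1 ψ) (ν : E3)
    {η η' : ℝ → ℝ} (hη : ∀ t, HasDerivAt η (η' t) t) (x : E3) :
    divg (fun x => ψ x + η (inner ℝ ν x) • (φ x - ψ x)) x =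
      divg ψ x + η (inner ℝ ν x) * (divg φ x - divg ψ x)
        + η' (inner ℝ ν x) * inner ℝ ν (φ x - ψ x) := by
  have h1 : HasFDerivAt φ (fderiv ℝ φ x) x := (hφ.differentiable (by norm_num) x).hasFDerivAt
  have h2 : HasFDerivAt ψ (fderiv ℝ ψ x) x := (hψ.differentiable (by norm_num) x).hasFDerivAt
  have h3 : HasFDerivAt (fun x : E3 => inner ℝ ν x) (innerSL ℝ ν) x := (innerSL ℝ ν).hasFDerivAt
  have h4 : HasFDerivAt (fun x : E3 => η (inner ℝ ν x)) (η' (inner ℝ ν x) • innerSL ℝ ν) x :=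
    (hη (inner ℝ ν x)).comp_hasFDerivAt x h3
  have h5 := h2.add (h4.smul (h1.sub h2))
  have h6 : fderiv ℝ (fun x => ψ x + η (inner ℝ ν x) • (φ x - ψ x)) x = _ := h5.fderiv
  unfold divg
  rw [h6]
  have h7 : ∀ (a : E3 →L[ℝ] ℝ) (v : E3), LinearMap.trace ℝ E3 ((a.smulRight v : E3 →L[ℝ] E3) : E3 →ₗ[ℝ] E3) = a v := by
    intro a v
    exact LinearMap.trace_smulRight (a : E3 →ₗ[ℝ] ℝ) v
  simp only [ContinuousLinearMap.toLinearMap_add, ContinuousLinearMap.toLinearMap_smul,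
    ContinuousLinearMap.toLinearMap_sub, map_add, map_smul, map_sub, h7]
  simp
  ring

lemma cut_ineq {Ω : Set E3} (hΩm : MeasurableSet Ω) (hΩf : volume Ω < ⊤) (hΩper : HasFinPer Ω)
    (ν : E3) (l c : ℝ) (hd : HasDerivAt (fun t => vol (Ω ∩ {x | inner ℝ ν x ≤ t})) c l)
    {φ ψ : E3 → E3} (hφ : ContDiff ℝ 1 φ) (hφc : HasCompactSupport φ) (hφ1 : ∀ x, ‖φ x‖ ≤ 1)
    (hψ : ContDiff ℝ 1 ψ) (hψc : HasCompactSupport ψ) (hψ1 : ∀ x, ‖ψ x‖ ≤ 1) :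
    (∫ x in Ω ∩ {x | l < inner ℝ ν x}, divg φ x) + (∫ x in Ω ∩ {x | inner ℝ ν x ≤ l}, divg ψ x)
      ≤ per Ω + 2 * ‖ν‖ * c := by
  have hmeas : ∀ t, MeasurableSet {x : E3 | inner ℝ ν x ≤ t} := fun t =>
    measurableSet_le (by fun_prop) (by fun_prop)
  have hmeas' : MeasurableSet {x : E3 | l < inner ℝ ν x} :=
    measurableSet_lt (by fun_prop) (by fun_prop)
  set f : ℝ → ℝ := fun t => vol (Ω ∩ {x | inner ℝ ν x ≤ t}) with hf
  choose! η η' e1 e2 e3 e4 e5 e6 e7 e8 using fun ε (hε : 0 < ε) => exists_cutoff l ε hε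
  have iφ := (divg_integrable hφ hφc).restrict (s := Ω)
  have iψ := (divg_integrable hψ hψc).restrict (s := Ω)
  have : IsFiniteMeasure (volume.restrict Ω) := ⟨by simpa using hΩf⟩
  -- the inequality at finite ε
  have key : ∀ ε, 0 < ε → ∫ x in Ω, (divg ψ x + η ε (inner ℝ ν x) * (divg φ x - divg ψ x))
      ≤ per Ω + 2 * ‖ν‖ * ((f (l + ε + ε^2) - f l)/ε) := by
    intro ε hε
    have hηc : ContDiff ℝ 1 (η ε) := by
      rw [contDiff_one_iff_deriv]
      refine ⟨fun t => (e1 ε hε t).differentiableAt, ?_⟩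
      have : deriv (η ε) = η' ε := funext fun t => (e1 ε hε t).deriv
      rw [this]; exact e2 ε hε
    have hcin : ContDiff ℝ 1 (fun x : E3 => (inner ℝ ν x : ℝ)) := (innerSL ℝ ν).contDiff
    set X : E3 → E3 := fun x => ψ x + η ε (inner ℝ ν x) • (φ x - ψ x) with hX
    have X1 : ContDiff ℝ 1 X := hψ.add ((hηc.comp hcin).smul (hφ.sub hψ))
    have X2 : HasCompactSupport X := by
      refine hψc.add ?_
      exact (hφc.sub hψc).smul_left (f := fun x => η ε (inner ℝ ν x))
    have X3 : ∀ x, ‖X x‖ ≤ 1 := by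
      intro x
      have := e3 ε hε (inner ℝ ν x)
      have hx : X x = (1 - η ε (inner ℝ ν x)) • ψ x + η ε (inner ℝ ν x) • φ x := by
        simp only [hX]; module
      rw [hx]
      refine (norm_add_le _ _).trans ?_
      rw [norm_smul, norm_smul, Real.norm_of_nonneg this.1, Real.norm_of_nonneg (by linarith)]
      nlinarith [hφ1 x, hψ1 x]
    have hper : ∫ x in Ω, divg X x ≤ per Ω := le_csSup hΩper ⟨X, X1, X2, X3, rfl⟩
    have iX := (divg_integrable X1 X2).restrict (s := Ω)
    have hηi : Integrable (fun x => η' ε (inner ℝ ν x)) (volume.restrict Ω) := by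
      refine Integrable.of_bound (C := 1/ε) ?_ ?_
      · have : Continuous (fun x : E3 => η' ε (inner ℝ ν x)) := (e2 ε hε).comp hcin.continuous
        exact this.aestronglyMeasurable
      · refine Eventually.of_forall fun x => ?_
        rw [Real.norm_of_nonneg (e6 ε hε _).1]
        exact (e6 ε hε _).2
    have hη'int : ∫ x in Ω, η' ε (inner ℝ ν x) ≤ (f (l + ε + ε^2) - f l)/ε := by
      set S : Set E3 := {x | inner ℝ ν x ≤ l + ε + ε^2} \ {x | inner ℝ ν x ≤ l} with hS
      have hSm : MeasurableSet S := (hmeas _).diff (hmeas _)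
      have h1 : ∫ x in Ω, η' ε (inner ℝ ν x) ≤ ∫ x in Ω, S.indicator (fun _ => 1/ε) x := by
        apply integral_mono hηi
        · exact (integrable_const _).indicator hSm
        · intro x
          simp only
          by_cases hx : x ∈ S
          · rw [indicator_of_mem hx]; exact (e6 ε hε _).2
          · rw [indicator_of_notMem hx]
            by_cases h : inner ℝ ν x ≤ l
            · rw [e7 ε hε _ h]
            · have : l + ε + ε^2 ≤ inner ℝ ν x := by
                by_contra h'
                exact hx ⟨(not_le.1 h').le, h⟩
              rw [e8 ε hε _ this]
      refine h1.trans (le_of_eq ?_)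
      rw [integral_indicator hSm, setIntegral_const, smul_eq_mul, measureReal_restrict_apply hSm]
      have : S ∩ Ω = (Ω ∩ {x | inner ℝ ν x ≤ l + ε + ε^2}) \ (Ω ∩ {x | inner ℝ ν x ≤ l}) := by
        ext x; simp only [hS, mem_inter_iff, Set.mem_sdiff, mem_ofPred_eq]; tauto
      rw [this, measureReal_sdiff]
      · simp only [hf, vol, Measure.real]; ring
      · intro x hx
        exact ⟨hx.1, le_trans (b := l) hx.2 (by nlinarith)⟩
      · exact hΩm.inter (hmeas _)
    have hpt : ∀ x, divg ψ x + η ε (inner ℝ ν x) * (divg φ x - divg ψ x)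
        ≤ divg X x + 2 * ‖ν‖ * η' ε (inner ℝ ν x) := by
      intro x
      rw [divg_glue hφ hψ ν (e1 ε hε) x]
      have h0 := (e6 ε hε (inner ℝ ν x)).1
      have h1 : |inner ℝ ν (φ x - ψ x)| ≤ ‖ν‖ * ‖φ x - ψ x‖ := abs_real_inner_le_norm _ _
      have h2 : ‖φ x - ψ x‖ ≤ 2 := by
        refine (norm_sub_le _ _).trans ?_
        linarith [hφ1 x, hψ1 x]
      have h3 : -(inner ℝ ν (φ x - ψ x)) ≤ 2 * ‖ν‖ := by
        have := neg_abs_le (inner ℝ ν (φ x - ψ x))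
        nlinarith [norm_nonneg ν]
      nlinarith
    have hηb : ∀ x, ‖η ε (inner ℝ ν x)‖ ≤ 1 := by
      intro x
      rw [Real.norm_of_nonneg (e3 ε hε _).1]; exact (e3 ε hε _).2
    have iL : Integrable (fun x => divg ψ x + η ε (inner ℝ ν x) * (divg φ x - divg ψ x))
        (volume.restrict Ω) := by
      refine iψ.add ((iφ.sub iψ).bdd_mul (c := 1) ?_ (Eventually.of_forall hηb))
      exact (hηc.comp hcin).continuous.aestronglyMeasurable
    calc _ ≤ ∫ x in Ω, (divg X x + 2 * ‖ν‖ * η' ε (inner ℝ ν x)) :=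
          integral_mono iL (iX.add (hηi.const_mul _)) hpt
      _ = (∫ x in Ω, divg X x) + 2 * ‖ν‖ * ∫ x in Ω, η' ε (inner ℝ ν x) := by
          rw [integral_add iX (hηi.const_mul _), integral_const_mul]
      _ ≤ _ := by gcongr
  -- passing to the limit
  have lim1 : Tendsto (fun ε => ∫ x in Ω, (divg ψ x + η ε (inner ℝ ν x) * (divg φ x - divg ψ x)))
      (𝓝[>] 0) (𝓝 (∫ x in Ω, ({x : E3 | l < inner ℝ ν x}.indicator (divg φ) x +
        {x : E3 | inner ℝ ν x ≤ l}.indicator (divg ψ) x))) := by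
    apply tendsto_integral_filter_of_dominated_convergence
      (fun x => ‖divg ψ x‖ + ‖divg φ x - divg ψ x‖)
    · filter_upwards [self_mem_nhdsWithin] with ε hε
      have hcin : Continuous (fun x : E3 => (inner ℝ ν x : ℝ)) := (innerSL ℝ ν).continuous
      have hηc : Continuous (η ε) := continuous_iff_continuousAt.2
        fun t => (e1 ε hε t).continuousAt
      exact ((divg_continuous hψ).add ((hηc.comp hcin).mul
        ((divg_continuous hφ).sub (divg_continuous hψ)))).aestronglyMeasurable
    · filter_upwards [self_mem_nhdsWithin] with ε hε
      refine Eventually.of_forall fun x => ?_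
      refine (norm_add_le _ _).trans ?_
      rw [norm_mul]
      have h1 := e3 ε hε (inner ℝ ν x)
      have : ‖η ε (inner ℝ ν x)‖ ≤ 1 := by rw [Real.norm_of_nonneg h1.1]; exact h1.2
      nlinarith [norm_nonneg (divg φ x - divg ψ x)]
    · exact iψ.norm.add (iφ.sub iψ).norm
    · refine Eventually.of_forall fun x => ?_
      apply tendsto_const_nhds.congr'
      by_cases hx : inner ℝ ν x ≤ l
      · filter_upwards [self_mem_nhdsWithin] with ε hε
        rw [e4 ε hε _ hx]
        simp [indicator, hx]
      · have hx' := not_le.1 hx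
        have hlim : Tendsto (fun ε : ℝ => l + ε + ε^2) (𝓝[>] 0) (𝓝 l) := by
          have : Continuous (fun ε : ℝ => l + ε + ε^2) := by fun_prop
          have h := this.tendsto 0
          simp only [add_zero, ne_eq, OfNat.ofNat_ne_zero, not_false_eq_true, zero_pow] at h
          exact h.mono_left nhdsWithin_le_nhds
        filter_upwards [self_mem_nhdsWithin, hlim.eventually_lt_const hx'] with ε hε h2
        rw [e5 ε hε _ h2.le]
        simp [indicator, hx, hx']
  have lim2 : Tendsto (fun ε => per Ω + 2 * ‖ν‖ * ((f (l + ε + ε^2) - f l)/ε)) (𝓝[>] 0)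
      (𝓝 (per Ω + 2 * ‖ν‖ * c)) := by
    apply Tendsto.const_add
    apply Tendsto.const_mul
    have hg : HasDerivAt (fun ε : ℝ => l + ε + ε^2) 1 0 := by
      have := ((hasDerivAt_id (0:ℝ)).const_add l).add (hasDerivAt_pow 2 (0:ℝ))
      exact this.congr_deriv (by simp)
    have hd' : HasDerivAt f c (l + 0 + 0^2) := by simpa using hd
    have hcomp : HasDerivAt (fun ε : ℝ => f (l + ε + ε^2)) (c * 1) 0 :=
      HasDerivAt.comp (h₂ := f) (0:ℝ) hd' hg
    have := hcomp.tendsto_slope_zero_right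
    simpa [smul_eq_mul, div_eq_inv_mul] using this
  have hle := le_of_tendsto_of_tendsto lim1 lim2
    (by filter_upwards [self_mem_nhdsWithin] with ε hε using key ε hε)
  rw [integral_add (iφ.indicator hmeas') (iψ.indicator (hmeas l)), setIntegral_indicator hmeas',
    setIntegral_indicator (hmeas l)] at hle
  exact hle

lemma zero_mem_perCand (Ω : Set E3) : (0:ℝ) ∈ perCand Ω :=
  ⟨fun _ => 0, contDiff_const, HasCompactSupport.zero, by simp, by simp [divg]⟩

lemma per_nonneg (Ω : Set E3) : 0 ≤ per Ω := by
  by_cases h : BddAbove (perCand Ω)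
  · exact le_csSup h (zero_mem_perCand Ω)
  · rw [per, Real.sSup_of_not_bddAbove h]

lemma per_cut {Ω : Set E3} (hΩm : MeasurableSet Ω) (hΩf : volume Ω < ⊤) (hΩper : HasFinPer Ω)
    (ν : E3) (l c : ℝ) (hd : HasDerivAt (fun t => vol (Ω ∩ {x | inner ℝ ν x ≤ t})) c l) :
    HasFinPer (Ω ∩ {x | l < inner ℝ ν x}) ∧ HasFinPer (Ω ∩ {x | inner ℝ ν x ≤ l}) ∧
    per (Ω ∩ {x | l < inner ℝ ν x}) + per (Ω ∩ {x | inner ℝ ν x ≤ l}) ≤ per Ω + 2 * ‖ν‖ * c := by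
  have key : ∀ a ∈ perCand (Ω ∩ {x | l < inner ℝ ν x}), ∀ b ∈ perCand (Ω ∩ {x | inner ℝ ν x ≤ l}),
      a + b ≤ per Ω + 2 * ‖ν‖ * c := by
    rintro a ⟨φ, h1, h2, h3, rfl⟩ b ⟨ψ, g1, g2, g3, rfl⟩
    exact cut_ineq hΩm hΩf hΩper ν l c hd h1 h2 h3 g1 g2 g3
  refine ⟨⟨per Ω + 2 * ‖ν‖ * c, fun a ha => by simpa using key a ha 0 (zero_mem_perCand _)⟩,
    ⟨per Ω + 2 * ‖ν‖ * c, fun b hb => by simpa using key 0 (zero_mem_perCand _) b hb⟩, ?_⟩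
  have h1 : ∀ b ∈ perCand (Ω ∩ {x | inner ℝ ν x ≤ l}),
      per (Ω ∩ {x | l < inner ℝ ν x}) ≤ per Ω + 2 * ‖ν‖ * c - b := fun b hb =>
    csSup_le ⟨0, zero_mem_perCand _⟩ fun a ha => by linarith [key a ha b hb]
  have h2 : per (Ω ∩ {x | inner ℝ ν x ≤ l}) ≤
      per Ω + 2 * ‖ν‖ * c - per (Ω ∩ {x | l < inner ℝ ν x}) :=
    csSup_le ⟨0, zero_mem_perCand _⟩ fun b hb => by linarith [h1 b hb]
  linarith

lemma coulomb_ball (d : ℝ) (hd : 0 ≤ d) :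
    ∫⁻ y in closedBall (0:E3) d, ENNReal.ofReal (1 / ‖y‖) = ENNReal.ofReal (2 * Real.pi * d^2) := by
  have hvol : (volume : Measure E3).real (ball 0 1) = Real.pi * 4 / 3 := by
    rw [Measure.real, EuclideanSpace.volume_ball_fin_three]
    simp only [ENNReal.ofReal_one, one_pow, one_mul]
    rw [ENNReal.toReal_ofReal (by positivity)]
  set f : ℝ → ℝ := (Iic d).indicator (fun r => 1 / r) with hf
  have h1 : ∀ y ∈ Ioi (0:ℝ), y ^ (Module.finrank ℝ E3 - 1) • f y = (Iic d).indicator (fun r => r) y := by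
    intro y hy
    have hy' : y ≠ 0 := (ne_of_gt hy)
    simp only [hf, indicator, finrank_euclideanSpace, Fintype.card_fin, smul_eq_mul]
    split_ifs
    · field_simp
    · simp
  have hioc : Ioi (0:ℝ) ∩ Iic d = Ioc 0 d := Ioi_inter_Iic
  have hint : Integrable (fun y : E3 => f ‖y‖) := by
    rw [integrable_fun_norm_addHaar, integrableOn_congr_fun h1 measurableSet_Ioi]
    rw [IntegrableOn, integrable_indicator_iff measurableSet_Iic, IntegrableOn,
      Measure.restrict_restrict measurableSet_Iic, inter_comm, hioc]
    exact (continuous_id.integrableOn_Icc (a := 0) (b := d)).mono_set Ioc_subset_Icc_self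
  have hval : ∫ y : E3, f ‖y‖ = 2 * Real.pi * d^2 := by
    rw [integral_fun_norm_addHaar, setIntegral_congr_fun measurableSet_Ioi h1,
      setIntegral_indicator measurableSet_Iic, hioc, ← intervalIntegral.integral_of_le hd,
      hvol, integral_id]
    simp
    ring
  have hnn : ∀ y : E3, 0 ≤ f ‖y‖ := by
    intro y
    simp only [hf, indicator]
    split_ifs
    · positivity
    · exact le_rfl
  rw [← hval, ofReal_integral_eq_lintegral_ofReal hint (Eventually.of_forall hnn),
    ← lintegral_indicator measurableSet_closedBall]
  congr 1
  ext y
  simp only [hf, indicator, mem_closedBall, dist_zero_right, mem_Iic]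
  split_ifs <;> simp

lemma gauss_norm :
    ∫⁻ ν : E3, ENNReal.ofReal (‖ν‖ * Real.exp (-‖ν‖^2)) = ENNReal.ofReal (2 * Real.pi) := by
  have hvol : (volume : Measure E3).real (ball 0 1) = Real.pi * 4 / 3 := by
    rw [Measure.real, EuclideanSpace.volume_ball_fin_three]
    simp only [ENNReal.ofReal_one, one_pow, one_mul]
    rw [ENNReal.toReal_ofReal (by positivity)]
  have h1 : ∀ y ∈ Ioi (0:ℝ), y ^ (Module.finrank ℝ E3 - 1) • (y * Real.exp (-y^2)) =
      y ^ (3:ℝ) * Real.exp (-y^(2:ℝ)) := by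
    intro y hy
    simp only [finrank_euclideanSpace, Fintype.card_fin, smul_eq_mul]
    norm_cast
    ring
  have hI := integral_rpow_mul_exp_neg_rpow (p := 2) (q := 3) (by norm_num) (by norm_num)
  have hG : (1/2 : ℝ) * Real.Gamma ((3 + 1)/2) = 1/2 := by
    rw [show ((3:ℝ)+1)/2 = 2 by norm_num, Real.Gamma_two]; norm_num
  rw [hG] at hI
  have hint : Integrable (fun y : E3 => ‖y‖ * Real.exp (-‖y‖^2)) := by
    have := integrable_fun_norm_addHaar (volume : Measure E3) (f := fun r : ℝ => r * Real.exp (-r^2))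
    rw [this, integrableOn_congr_fun h1 measurableSet_Ioi]
    by_contra h
    rw [integral_undef h] at hI
    norm_num at hI
  have hval : ∫ y : E3, ‖y‖ * Real.exp (-‖y‖^2) = 2 * Real.pi := by
    rw [integral_fun_norm_addHaar (volume : Measure E3) (fun r : ℝ => r * Real.exp (-r^2)),
      setIntegral_congr_fun measurableSet_Ioi h1, hI, hvol]
    simp
    ring
  rw [← hval, ofReal_integral_eq_lintegral_ofReal hint
    (Eventually.of_forall fun y => by positivity)]

lemma gauss_inner_basis (r : ℝ) (hr : 0 ≤ r) :
    ∫⁻ ν : E3, ENNReal.ofReal (|inner ℝ ν (EuclideanSpace.single 0 r)| * Real.exp (-‖ν‖^2)) =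
      ENNReal.ofReal (Real.pi * r) := by
  have hI := integral_rpow_mul_exp_neg_rpow (p := 2) (q := 1) (by norm_num) (by norm_num)
  have hG : (1/2 : ℝ) * Real.Gamma ((1 + 1)/2) = 1/2 := by
    rw [show ((1:ℝ)+1)/2 = 1 by norm_num, Real.Gamma_one]; norm_num
  rw [hG] at hI
  have h1 : ∀ y ∈ Ioi (0:ℝ), y ^ (1:ℝ) * Real.exp (-y^(2:ℝ)) = y * Real.exp (-y^2) := by
    intro y hy
    norm_cast
    simp
  rw [setIntegral_congr_fun measurableSet_Ioi h1] at hI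
  have hA : ∫ x : ℝ, |x| * Real.exp (-x^2) = 1 := by
    have := integral_comp_abs (f := fun x : ℝ => x * Real.exp (-x^2))
    simp only [sq_abs] at this
    rw [this, hI]; norm_num
  have hAi : Integrable (fun x : ℝ => |x| * Real.exp (-x^2)) := by
    by_contra h
    rw [integral_undef h] at hA
    norm_num at hA
  have hB : ∫ x : ℝ, Real.exp (-x^2) = Real.sqrt Real.pi := by
    have := integral_gaussian 1
    simpa using this
  have hBi : Integrable (fun x : ℝ => Real.exp (-x^2)) := by
    have := integrable_exp_neg_mul_sq (b := 1) one_pos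
    simpa using this
  set g : Fin 3 → ℝ → ℝ := ![fun x => |x| * Real.exp (-x^2), fun x => Real.exp (-x^2),
    fun x => Real.exp (-x^2)] with hg
  have hgi : ∀ i, Integrable (g i) := by
    intro i
    fin_cases i
    · exact hAi
    · exact hBi
    · exact hBi
  have hprod : ∀ ν : E3, |inner ℝ ν (EuclideanSpace.single 0 r)| * Real.exp (-‖ν‖^2) =
      r * ∏ i, g i (ν i) := by
    intro ν
    rw [EuclideanSpace.inner_single_right, EuclideanSpace.norm_sq_eq]
    simp only [Fin.prod_univ_three, Fin.sum_univ_three, hg]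
    simp [abs_mul, abs_of_nonneg hr, Real.exp_add]
    ring
  simp_rw [hprod]
  have hint0 : Integrable (fun x : Fin 3 → ℝ => r * ∏ i, g i (x i)) :=
    (Integrable.fintype_prod hgi).const_mul r
  have hmp := EuclideanSpace.volume_preserving_symm_measurableEquiv_toLp (Fin 3)
  have hint : Integrable (fun x : E3 => r * ∏ i, g i (x i)) := by
    exact (hmp.integrable_comp_emb (MeasurableEquiv.measurableEmbedding _)
      (g := fun x : Fin 3 → ℝ => r * ∏ i, g i (x i))).2 hint0
  have hval : ∫ x : E3, r * ∏ i, g i (x i) = Real.pi * r := by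
    have := hmp.integral_comp (MeasurableEquiv.measurableEmbedding _)
      (fun x : Fin 3 → ℝ => r * ∏ i, g i (x i))
    refine Eq.trans this ?_
    rw [integral_const_mul, integral_fintype_prod_volume_eq_prod]
    simp only [Fin.prod_univ_three, hg]
    simp [hA, hB]
    rw [Real.mul_self_sqrt Real.pi_pos.le]; ring
  rw [← hval, ofReal_integral_eq_lintegral_ofReal hint]
  refine Eventually.of_forall fun ν => ?_
  simp only [Pi.zero_apply]
  rw [← hprod]; positivity

lemma gauss_inner (v : E3) :
    ∫⁻ ν : E3, ENNReal.ofReal (|inner ℝ ν v| * Real.exp (-‖ν‖^2)) =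
      ENNReal.ofReal (Real.pi * ‖v‖) := by
  rw [← gauss_inner_basis ‖v‖ (norm_nonneg v)]
  set w : E3 := EuclideanSpace.single 0 ‖v‖ with hw
  have hn : ‖v‖ = ‖w‖ := by simp [hw]
  set R := Submodule.reflection (Submodule.span ℝ {v - w})ᗮ with hR
  have hRv : R v = w := Submodule.reflection_sub hn
  have hmp : MeasurePreserving R := R.measurePreserving
  have := hmp.lintegral_comp_emb R.toHomeomorph.measurableEmbedding
    (fun ν : E3 => ENNReal.ofReal (|inner ℝ ν w| * Real.exp (-‖ν‖^2)))
  rw [← this]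
  congr 1
  ext ν
  rw [← hRv, R.inner_map_map, R.norm_map]

/-- The Coulomb kernel on pairs of points. -/
def Kc (p : E3 × E3) : ℝ := 1 / ‖p.1 - p.2‖

lemma Kc_nonneg (p : E3 × E3) : 0 ≤ Kc p := by unfold Kc; positivity

lemma Kc_meas : Measurable Kc := by unfold Kc; fun_prop

lemma pot_le {Λ : Set E3} (hΛb : IsBounded Λ) {x : E3} (hx : x ∈ Λ) :
    ∫⁻ y in Λ, ENNReal.ofReal (Kc (x, y)) ≤ ENNReal.ofReal (2 * Real.pi * (diam Λ)^2) := by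
  have hsub : Λ ⊆ closedBall x (diam Λ) := fun y hy => dist_le_diam_of_mem hΛb hy hx
  refine (lintegral_mono_set hsub).trans ?_
  rw [← coulomb_ball _ diam_nonneg, ← lintegral_indicator measurableSet_closedBall,
    ← lintegral_indicator measurableSet_closedBall,
    ← lintegral_sub_left_eq_self (μ := (volume : Measure E3)) (g := x)]
  apply le_of_eq
  congr 1
  ext y
  simp [indicator, Kc, dist_eq_norm]

lemma lint_prod_le {Λ Ω : Set E3} (hΛb : IsBounded Λ) (hΩ : Ω ⊆ Λ) :
    ∫⁻ p in Ω ×ˢ Λ, ENNReal.ofReal (Kc p) ≤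
      ENNReal.ofReal (2 * Real.pi * (diam Λ)^2) * volume Ω := by
  rw [Measure.volume_eq_prod, ← Measure.prod_restrict, lintegral_prod _ (by exact Kc_meas.ennreal_ofReal.aemeasurable)]
  calc _ ≤ ∫⁻ x in Ω, ENNReal.ofReal (2 * Real.pi * (diam Λ)^2) :=
        setLIntegral_mono measurable_const fun x hx => pot_le hΛb (hΩ hx)
    _ = _ := by simp

lemma Kc_int {Λ : Set E3} (hΛb : IsBounded Λ) :
    IntegrableOn Kc (Λ ×ˢ Λ) := by
  refine ⟨Kc_meas.aestronglyMeasurable, ?_⟩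
  rw [hasFiniteIntegral_iff_ofReal (Eventually.of_forall Kc_nonneg)]
  refine (lint_prod_le hΛb subset_rfl).trans_lt ?_
  exact ENNReal.mul_lt_top ENNReal.ofReal_lt_top hΛb.measure_lt_top

/-- The Coulomb interaction between two sets. -/
def Dr (A B : Set E3) : ℝ := ∫ p in A ×ˢ B, Kc p

lemma Dr_nonneg (A B : Set E3) : 0 ≤ Dr A B := integral_nonneg Kc_nonneg

lemma Dr_swap (A B : Set E3) : Dr A B = Dr B A := by
  unfold Dr
  rw [Measure.volume_eq_prod, ← Measure.prod_restrict, ← Measure.prod_restrict, ← integral_prod_swap]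
  congr 1
  ext p
  simp [Kc, norm_sub_rev]

lemma Dr_eq {Λ A B : Set E3} (hΛm : MeasurableSet Λ) (hΛb : IsBounded Λ) (hA : A ⊆ Λ) (hB : B ⊆ Λ) :
    Dr A B = ∫ x in A, ∫ y in B, 1 / ‖x - y‖ := by
  have h := (Kc_int hΛb).mono_set (prod_mono hA hB)
  rw [Measure.volume_eq_prod] at h
  unfold Dr
  rw [Measure.volume_eq_prod, setIntegral_prod _ h]
  rfl

lemma Dr_le {Λ Ω : Set E3} (hΛm : MeasurableSet Λ) (hΛb : IsBounded Λ) (hΩ : Ω ⊆ Λ)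
    (hΩm : MeasurableSet Ω) : Dr Ω Λ ≤ 2 * Real.pi * (diam Λ)^2 * vol Ω := by
  unfold Dr
  rw [integral_eq_lintegral_of_nonneg_ae (Eventually.of_forall Kc_nonneg) Kc_meas.aestronglyMeasurable]
  refine (ENNReal.toReal_mono ?_ (lint_prod_le hΛb hΩ)).trans ?_
  · exact (ENNReal.mul_lt_top ENNReal.ofReal_lt_top (hΛb.subset hΩ).measure_lt_top).ne
  · rw [ENNReal.toReal_mul, ENNReal.toReal_ofReal (by positivity), vol]

lemma II_eq {Λ A : Set E3} (hΛm : MeasurableSet Λ) (hΛb : IsBounded Λ) (hA : A ⊆ Λ) :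
    II A = per A + (1/2) * Dr A A := by
  rw [II, Dr_eq hΛm hΛb hA hA]

lemma II_nonneg (A : Set E3) : 0 ≤ II A := by
  unfold II
  have h1 := per_nonneg A
  have h2 : 0 ≤ ∫ x in A, ∫ y in A, 1 / ‖x - y‖ := by
    apply integral_nonneg; intro x; apply integral_nonneg; intro y
    simp only [Pi.zero_apply]; positivity
  positivity

lemma muStar_le {A : Set E3} (hm : MeasurableSet A) (hp : HasFinPer A) (hf : volume A < ⊤) :
    muStar * vol A ≤ II A := by
  by_cases h0 : volume A = 0
  · simp [vol, h0, II_nonneg]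
  · have hv : 0 < vol A := ENNReal.toReal_pos h0 hf.ne
    rw [← le_div_iff₀ hv]
    apply csInf_le
    · refine ⟨0, ?_⟩
      rintro t ⟨B, -, -, -, -, rfl⟩
      exact div_nonneg (II_nonneg B) ENNReal.toReal_nonneg
    · exact ⟨A, hm, hp, pos_iff_ne_zero.2 h0, hf, rfl⟩

lemma ldEnergy_ge {Λ Ω : Set E3} (ρ : ℝ) (hρ : 0 ≤ ρ) (hΛm : MeasurableSet Λ) (hΛb : IsBounded Λ)
    (hΩ : Ω ⊆ Λ) (hΩm : MeasurableSet Ω) :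
    per Ω + (1/2) * Dr Ω Ω - ρ * (2 * Real.pi * (diam Λ)^2 * vol Ω) ≤ ldEnergy Λ ρ Ω := by
  have hΛΛ := Kc_int hΛb
  have mk : ∀ A B : Set E3, MeasurableSet A → MeasurableSet B → A ⊆ Λ → B ⊆ Λ →
      Integrable ((A ×ˢ B).indicator Kc) := fun A B hA hB h1 h2 =>
    (integrable_indicator_iff (hA.prod hB)).2 (hΛΛ.mono_set (prod_mono h1 h2))
  have i1 := mk Ω Ω hΩm hΩm hΩ hΩ
  have i2 := mk Ω Λ hΩm hΛm hΩ subset_rfl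
  have i3 := mk Λ Ω hΛm hΩm subset_rfl hΩ
  have i4 := mk Λ Λ hΛm hΛm subset_rfl subset_rfl
  set G : E3 × E3 → ℝ := fun p => (Ω ×ˢ Ω).indicator Kc p - ρ * (Ω ×ˢ Λ).indicator Kc p
    - ρ * (Λ ×ˢ Ω).indicator Kc p + ρ^2 * (Λ ×ˢ Λ).indicator Kc p with hG
  have hGi : Integrable G := ((i1.sub (i2.const_mul ρ)).sub (i3.const_mul ρ)).add (i4.const_mul _)
  have hGv : ∫ p, G p = Dr Ω Ω - ρ * Dr Ω Λ - ρ * Dr Λ Ω + ρ^2 * Dr Λ Λ := by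
    have e1 : ∫ p, G p = (∫ p, ((Ω ×ˢ Ω).indicator Kc p - ρ * (Ω ×ˢ Λ).indicator Kc p
        - ρ * (Λ ×ˢ Ω).indicator Kc p)) + ∫ p, ρ^2 * (Λ ×ˢ Λ).indicator Kc p :=
      integral_add ((i1.sub (i2.const_mul ρ)).sub (i3.const_mul ρ)) (i4.const_mul _)
    have e2 : (∫ p, ((Ω ×ˢ Ω).indicator Kc p - ρ * (Ω ×ˢ Λ).indicator Kc p
        - ρ * (Λ ×ˢ Ω).indicator Kc p)) = (∫ p, ((Ω ×ˢ Ω).indicator Kc p - ρ * (Ω ×ˢ Λ).indicator Kc p))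
        - ∫ p, ρ * (Λ ×ˢ Ω).indicator Kc p :=
      integral_sub (i1.sub (i2.const_mul ρ)) (i3.const_mul ρ)
    have e3 : (∫ p, ((Ω ×ˢ Ω).indicator Kc p - ρ * (Ω ×ˢ Λ).indicator Kc p)) =
        (∫ p, (Ω ×ˢ Ω).indicator Kc p) - ∫ p, ρ * (Ω ×ˢ Λ).indicator Kc p :=
      integral_sub i1 (i2.const_mul ρ)
    rw [e1, e2, e3]
    simp only [integral_const_mul]
    rw [integral_indicator (hΩm.prod hΩm), integral_indicator (hΩm.prod hΛm),
      integral_indicator (hΛm.prod hΩm), integral_indicator (hΛm.prod hΛm)]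
    rfl
  have hld : ldEnergy Λ ρ Ω = per Ω + (1/2) * ∫ p, G p := by
    rw [ldEnergy]
    rw [Measure.volume_eq_prod] at hGi ⊢
    rw [integral_prod _ hGi]
    congr 2
    apply integral_congr_ae
    refine Eventually.of_forall fun x => ?_
    apply integral_congr_ae
    refine Eventually.of_forall fun y => ?_
    simp only [hG, indicator, Kc, mem_prod]
    by_cases h1 : x ∈ Ω <;> by_cases h2 : y ∈ Ω <;> by_cases h3 : x ∈ Λ <;> by_cases h4 : y ∈ Λ <;>
      simp [h1, h2, h3, h4] <;> ring
  rw [hld, hGv, Dr_swap Λ Ω]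
  have h1 := Dr_le hΛm hΛb hΩ hΩm
  have h2 := Dr_nonneg Λ Λ
  have h3 := mul_le_mul_of_nonneg_left h1 hρ
  nlinarith [mul_nonneg (sq_nonneg ρ) h2]

/-- Pairs of points separated by the hyperplane `⟨ν, x⟩ = l`. -/
def SepSet (Ω : Set E3) (ν : E3) (l : ℝ) : Set (E3 × E3) :=
  (Ω ∩ {x | l < inner ℝ ν x}) ×ˢ (Ω ∩ {x | inner ℝ ν x ≤ l}) ∪
  (Ω ∩ {x | inner ℝ ν x ≤ l}) ×ˢ (Ω ∩ {x | l < inner ℝ ν x})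

lemma sep_bound (ρ : ℝ) (hρ : 0 ≤ ρ) (Λ : Set E3) (hΛo : IsOpen Λ) (hΛb : IsBounded Λ)
    (Ω : Set E3) (hΩm : MeasurableSet Ω) (hΩΛ : Ω ⊆ Λ) (hΩper : HasFinPer Ω)
    (hE : ldEnergy Λ ρ Ω ≤ muStar * vol Ω)
    (ν : E3) (l c : ℝ) (hd : HasDerivAt (fun t => vol (Ω ∩ {x | inner ℝ ν x ≤ t})) c l) :
    ∫⁻ p in SepSet Ω ν l, ENNReal.ofReal (Kc p) ≤
      ENNReal.ofReal (4 * ‖ν‖ * c + 2 * (ρ * (2 * Real.pi * (diam Λ)^2 * vol Ω))) := by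
  have hΛm := hΛo.measurableSet
  have hΩf : volume Ω < ⊤ := (hΛb.subset hΩΛ).measure_lt_top
  obtain ⟨p1, p2, p3⟩ := per_cut hΩm hΩf hΩper ν l c hd
  have hmeas : MeasurableSet {x : E3 | inner ℝ ν x ≤ l} :=
    measurableSet_le (by fun_prop) (by fun_prop)
  have hmeas' : MeasurableSet {x : E3 | l < inner ℝ ν x} :=
    measurableSet_lt (by fun_prop) (by fun_prop)
  have hge := ldEnergy_ge ρ hρ hΛm hΛb hΩΛ hΩm
  unfold SepSet
  set A := Ω ∩ {x | l < inner ℝ ν x} with hA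
  set B := Ω ∩ {x | inner ℝ ν x ≤ l} with hB
  have hAm : MeasurableSet A := hΩm.inter hmeas'
  have hBm : MeasurableSet B := hΩm.inter hmeas
  have hAΩ : A ⊆ Ω := inter_subset_left
  have hBΩ : B ⊆ Ω := inter_subset_left
  have hAf : volume A < ⊤ := (measure_mono hAΩ).trans_lt hΩf
  have hBf : volume B < ⊤ := (measure_mono hBΩ).trans_lt hΩf
  have hAB : A ∪ B = Ω := by
    ext x; simp only [hA, hB, mem_union, mem_inter_iff, mem_ofPred_eq]
    have := lt_or_ge l (inner ℝ ν x)
    tauto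
  have hdis : Disjoint A B := by
    rw [Set.disjoint_left]
    intro x hx hx'
    have h1 : l < inner ℝ ν x := hx.2
    have h2 : inner ℝ ν x ≤ l := hx'.2
    linarith
  have hvol : vol Ω = vol A + vol B := by
    rw [← hAB, vol, measure_union hdis hBm, ENNReal.toReal_add hAf.ne hBf.ne]; rfl
  have m1 := muStar_le hAm p1 hAf
  have m2 := muStar_le hBm p2 hBf
  rw [II_eq hΛm hΛb (hAΩ.trans hΩΛ)] at m1
  rw [II_eq hΛm hΛb (hBΩ.trans hΩΛ)] at m2
  have hK := Kc_int hΛb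
  have iK : ∀ C D : Set E3, C ⊆ Ω → D ⊆ Ω → IntegrableOn Kc (C ×ˢ D) := fun C D h1 h2 =>
    hK.mono_set (prod_mono (h1.trans hΩΛ) (h2.trans hΩΛ))
  have hsplit : Dr Ω Ω = Dr A A + Dr B B + (Dr A B + Dr B A) := by
    have e0 : Dr Ω Ω = Dr A Ω + Dr B Ω := by
      unfold Dr
      rw [← setIntegral_union (hdis.set_prod_left _ _) (hBm.prod hΩm) (iK _ _ hAΩ subset_rfl)
        (iK _ _ hBΩ subset_rfl), ← union_prod, hAB]
    have e1 : ∀ C ⊆ Ω, MeasurableSet C → Dr C Ω = Dr C A + Dr C B := by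
      intro C hC hCm
      unfold Dr
      rw [← setIntegral_union (hdis.set_prod_right _ _) (hCm.prod hBm) (iK _ _ hC hAΩ)
        (iK _ _ hC hBΩ), ← prod_union, hAB]
    rw [e0, e1 A hAΩ hAm, e1 B hBΩ hBm]; ring
  have hfin : Dr A B + Dr B A ≤ 4 * ‖ν‖ * c + 2 * (ρ * (2 * Real.pi * (diam Λ)^2 * vol Ω)) := by
    have : muStar * vol Ω = muStar * vol A + muStar * vol B := by rw [hvol]; ring
    linarith
  have hsep : ∫ p in A ×ˢ B ∪ B ×ˢ A, Kc p = Dr A B + Dr B A :=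
    setIntegral_union (hdis.set_prod_left _ _) (hBm.prod hAm) (iK _ _ hAΩ hBΩ) (iK _ _ hBΩ hAΩ)
  rw [← ofReal_integral_eq_lintegral_ofReal ((iK _ _ hAΩ hBΩ).union (iK _ _ hBΩ hAΩ))
    (Eventually.of_forall Kc_nonneg), hsep]
  exact ENNReal.ofReal_le_ofReal hfin

lemma slab_bound (ρ : ℝ) (hρ : 0 ≤ ρ) (Λ : Set E3) (hΛo : IsOpen Λ) (hΛb : IsBounded Λ)
    (Ω : Set E3) (hΩm : MeasurableSet Ω) (hΩΛ : Ω ⊆ Λ) (hΩper : HasFinPer Ω)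
    (hE : ldEnergy Λ ρ Ω ≤ muStar * vol Ω) (a : E3) (ha : a ∈ Ω) (ν : E3) :
    ∫⁻ p in Ω ×ˢ Ω, ENNReal.ofReal (|inner ℝ ν (p.1 - p.2)|) * ENNReal.ofReal (Kc p) ≤
      ENNReal.ofReal (‖ν‖ * ((4 + 8 * Real.pi * ρ * (diam Λ)^3) * vol Ω)) := by
  have hΩf : volume Ω < ⊤ := (hΛb.subset hΩΛ).measure_lt_top
  set d := diam Λ with hd
  have hd0 : 0 ≤ d := diam_nonneg
  set α := inner ℝ ν a - ‖ν‖ * d with hα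
  set β := inner ℝ ν a + ‖ν‖ * d with hβ
  have hνd : 0 ≤ ‖ν‖ * d := by positivity
  have hαβ : α ≤ β := by linarith
  have hin : ∀ x ∈ Ω, α ≤ inner ℝ ν x ∧ inner ℝ ν x ≤ β := by
    intro x hx
    have h1 : ‖x - a‖ ≤ d := by
      rw [← dist_eq_norm]; exact dist_le_diam_of_mem hΛb (hΩΛ hx) (hΩΛ ha)
    have h2 : |inner ℝ ν (x - a)| ≤ ‖ν‖ * d :=
      (abs_real_inner_le_norm _ _).trans (mul_le_mul_of_nonneg_left h1 (norm_nonneg _))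
    rw [inner_sub_right, abs_le] at h2
    constructor <;> linarith [h2.1, h2.2]
  set f : ℝ → ℝ := fun t => vol (Ω ∩ {x | inner ℝ ν x ≤ t}) with hf
  have hfm : Monotone f := by
    intro s t hst
    apply ENNReal.toReal_mono ((measure_mono inter_subset_left).trans_lt hΩf).ne
    exact measure_mono (inter_subset_inter_right _ fun x hx => le_trans (b := s) hx hst)
  have hf0 : ∀ t, 0 ≤ f t := fun t => ENNReal.toReal_nonneg
  have hf1 : ∀ t, f t ≤ vol Ω := fun t =>
    ENNReal.toReal_mono hΩf.ne (measure_mono inter_subset_left)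
  set S : Set (ℝ × (E3 × E3)) := {q | (q.1 < inner ℝ ν q.2.1 ∧ inner ℝ ν q.2.2 ≤ q.1) ∨
    (inner ℝ ν q.2.1 ≤ q.1 ∧ q.1 < inner ℝ ν q.2.2)} with hS
  have hSm : MeasurableSet S := by
    have m1 : Measurable (fun q : ℝ × (E3 × E3) => (inner ℝ ν q.2.1 : ℝ)) := by fun_prop
    have m2 : Measurable (fun q : ℝ × (E3 × E3) => (inner ℝ ν q.2.2 : ℝ)) := by fun_prop
    exact ((measurableSet_lt measurable_fst m1).inter (measurableSet_le m2 measurable_fst)).union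
      ((measurableSet_le m1 measurable_fst).inter (measurableSet_lt measurable_fst m2))
  have hSl : ∀ l, MeasurableSet (Prod.mk l ⁻¹' S) := fun l => measurable_prodMk_left hSm
  have hSp : ∀ p, MeasurableSet ((fun l : ℝ => (l, p)) ⁻¹' S) := fun p => measurable_prodMk_right hSm
  -- pointwise layer-cake
  have step1 : ∀ p ∈ Ω ×ˢ Ω, ENNReal.ofReal (|inner ℝ ν (p.1 - p.2)|) * ENNReal.ofReal (Kc p) ≤
      ∫⁻ l in Ioc α β, S.indicator (fun q => ENNReal.ofReal (Kc q.2)) (l, p) := by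
    rintro p ⟨hp1, hp2⟩
    have e : ∀ l : ℝ, S.indicator (fun q => ENNReal.ofReal (Kc q.2)) (l, p) =
        ((fun l : ℝ => (l, p)) ⁻¹' S).indicator (fun _ => ENNReal.ofReal (Kc p)) l := by
      intro l; simp [indicator]
    simp_rw [e]
    rw [lintegral_indicator_const (hSp p), Measure.restrict_apply (hSp p), mul_comm]
    gcongr
    have hsub : Ioo (min (inner ℝ ν p.1) (inner ℝ ν p.2)) (max (inner ℝ ν p.1) (inner ℝ ν p.2)) ⊆
        (fun l : ℝ => (l, p)) ⁻¹' S ∩ Ioc α β := by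
      rintro l ⟨h1, h2⟩
      have q1 := hin _ hp1
      have q2 := hin _ hp2
      rw [min_lt_iff] at h1
      rw [lt_max_iff] at h2
      refine ⟨?_, ?_, ?_⟩
      · show (l < inner ℝ ν p.1 ∧ inner ℝ ν p.2 ≤ l) ∨ (inner ℝ ν p.1 ≤ l ∧ l < inner ℝ ν p.2)
        rcases h1 with h1 | h1 <;> rcases h2 with h2 | h2
        · linarith
        · right; exact ⟨h1.le, h2⟩
        · left; exact ⟨h2, h1.le⟩
        · linarith
      · rcases h1 with h1 | h1
        · exact q1.1.trans_lt h1
        · exact q2.1.trans_lt h1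
      · rcases h2 with h2 | h2
        · exact h2.le.trans q1.2
        · exact h2.le.trans q2.2
    refine le_trans ?_ (measure_mono hsub)
    rw [Real.volume_Ioo, max_sub_min_eq_abs', inner_sub_right]
  set c2 := ρ * (2 * Real.pi * d^2 * vol Ω) with hc2
  have hv0 : 0 ≤ vol Ω := ENNReal.toReal_nonneg
  have hc20 : 0 ≤ c2 := by positivity
  have hder : IntervalIntegrable (deriv f) volume α β :=
    MonotoneOn.intervalIntegrable_deriv (hfm.monotoneOn _)
  have hderv : ∫ l in α..β, deriv f l ≤ vol Ω := by
    have := MonotoneOn.intervalIntegral_deriv_mem_uIcc (a := α) (b := β) (hfm.monotoneOn _)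
    rw [uIcc_of_le (by linarith [hfm hαβ])] at this
    linarith [this.2, hf0 α, hf1 β]
  have hint : IntegrableOn (fun l => 4 * ‖ν‖ * deriv f l + 2 * c2) (Ioc α β) := by
    have := (hder.const_mul (4 * ‖ν‖)).add (intervalIntegrable_const (c := 2 * c2))
    exact (intervalIntegrable_iff_integrableOn_Ioc_of_le hαβ).1 this
  calc _ ≤ ∫⁻ p in Ω ×ˢ Ω, ∫⁻ l in Ioc α β, S.indicator (fun q => ENNReal.ofReal (Kc q.2)) (l, p) :=
        setLIntegral_mono' (hΩm.prod hΩm) step1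
    _ = ∫⁻ l in Ioc α β, ∫⁻ p in Ω ×ˢ Ω, S.indicator (fun q => ENNReal.ofReal (Kc q.2)) (l, p) := by
        rw [lintegral_lintegral_swap]
        apply Measurable.aemeasurable
        have : Measurable (S.indicator (fun q => ENNReal.ofReal (Kc q.2))) :=
          (Kc_meas.ennreal_ofReal.comp measurable_snd).indicator hSm
        exact this.comp measurable_swap
    _ ≤ ∫⁻ l in Ioc α β, ENNReal.ofReal (4 * ‖ν‖ * deriv f l + 2 * c2) := by
        apply lintegral_mono_ae
        filter_upwards [ae_restrict_of_ae hfm.ae_differentiableAt] with l hl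
        refine le_trans ?_ (sep_bound ρ hρ Λ hΛo hΛb Ω hΩm hΩΛ hΩper hE ν l (deriv f l) hl.hasDerivAt)
        have e : ∀ p : E3 × E3, S.indicator (fun q => ENNReal.ofReal (Kc q.2)) (l, p) =
            (Prod.mk l ⁻¹' S).indicator (fun p => ENNReal.ofReal (Kc p)) p := by
          intro p; simp [indicator]
        simp_rw [e]
        rw [lintegral_indicator (hSl l), Measure.restrict_restrict (hSl l)]
        apply lintegral_mono_set
        rintro ⟨x, y⟩ ⟨h1, h2, h3⟩
        rcases h1 with h1 | h1
        · left; exact ⟨⟨h2, h1.1⟩, ⟨h3, h1.2⟩⟩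
        · right; exact ⟨⟨h2, h1.1⟩, ⟨h3, h1.2⟩⟩
    _ = ENNReal.ofReal (∫ l in Ioc α β, (4 * ‖ν‖ * deriv f l + 2 * c2)) := by
        rw [ofReal_integral_eq_lintegral_ofReal hint]
        refine Eventually.of_forall fun l => ?_
        have : 0 ≤ deriv f l := hfm.deriv_nonneg
        simp only [Pi.zero_apply]; positivity
    _ ≤ _ := by
        apply ENNReal.ofReal_le_ofReal
        rw [← intervalIntegral.integral_of_le hαβ,
          intervalIntegral.integral_add (hder.const_mul _) intervalIntegrable_const,
          intervalIntegral.integral_const_mul, intervalIntegral.integral_const, smul_eq_mul]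
        have : β - α = 2 * (‖ν‖ * d) := by rw [hα, hβ]; ring
        rw [this]
        have h4 : 4 * ‖ν‖ * ∫ l in α..β, deriv f l ≤ 4 * ‖ν‖ * vol Ω := by gcongr
        refine (add_le_add_left h4 _).trans (le_of_eq ?_)
        rw [hc2]; ring

/-- **Estimate on the mass**: if `Ω ⊆ Λ` satisfies `𝓔_Λ[ρ,Ω] ≤ μ*|Ω|`, then
`|Ω| ≤ 8 + 16π ρ diam(Λ)³`. -/
theorem mass_bound (ρ : ℝ) (hρ : 0 ≤ ρ) (Λ : Set E3) (hΛo : IsOpen Λ) (hΛb : IsBounded Λ)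
    (Ω : Set E3) (hΩm : MeasurableSet Ω) (hΩΛ : Ω ⊆ Λ) (hΩper : HasFinPer Ω)
    (hΩpos : 0 < volume Ω) (hE : ldEnergy Λ ρ Ω ≤ muStar * vol Ω) :
    vol Ω ≤ 8 + 16 * Real.pi * ρ * (Metric.diam Λ)^3 := by
  have hΩf : volume Ω < ⊤ := (hΛb.subset hΩΛ).measure_lt_top
  have hv : 0 < vol Ω := ENNReal.toReal_pos hΩpos.ne' hΩf.ne
  obtain ⟨a, ha⟩ : Ω.Nonempty := nonempty_of_measure_ne_zero hΩpos.ne'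
  have hd0 : 0 ≤ diam Λ := diam_nonneg
  have hpi := Real.pi_pos
  set M := (4 + 8 * Real.pi * ρ * (diam Λ)^3) * vol Ω with hM
  have hM0 : 0 ≤ M := by positivity
  have hslab := slab_bound ρ hρ Λ hΛo hΛb Ω hΩm hΩΛ hΩper hE a ha
  set g : E3 → ℝ := fun ν => Real.exp (-‖ν‖^2) with hg
  have hgm : Measurable g := by fun_prop
  have up : ∫⁻ ν, ENNReal.ofReal (g ν) * ∫⁻ p in Ω ×ˢ Ω, ENNReal.ofReal (|inner ℝ ν (p.1 - p.2)|) *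
      ENNReal.ofReal (Kc p) ≤ ENNReal.ofReal (2 * Real.pi * M) := by
    calc _ ≤ ∫⁻ ν : E3, ENNReal.ofReal M * ENNReal.ofReal (‖ν‖ * Real.exp (-‖ν‖^2)) := by
          apply lintegral_mono
          intro ν
          refine (mul_le_mul_right (hslab ν) _).trans (le_of_eq ?_)
          beta_reduce
          rw [← ENNReal.ofReal_mul (by positivity), ← ENNReal.ofReal_mul hM0]
          congr 1; simp only [hg, hM]; ring
      _ = ENNReal.ofReal M * ENNReal.ofReal (2 * Real.pi) := by
          rw [lintegral_const_mul _ (by fun_prop), gauss_norm]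
      _ = _ := by rw [← ENNReal.ofReal_mul hM0, mul_comm]
  have hF : Measurable (fun q : E3 × (E3 × E3) => ENNReal.ofReal (g q.1) *
      (ENNReal.ofReal (|inner ℝ q.1 (q.2.1 - q.2.2)|) * ENNReal.ofReal (Kc q.2))) := by
    have m1 : Measurable (fun q : E3 × (E3 × E3) => (inner ℝ q.1 (q.2.1 - q.2.2) : ℝ)) := by fun_prop
    have m2 : Measurable (fun q : E3 × (E3 × E3) => Kc q.2) := Kc_meas.comp measurable_snd
    have m3 : Measurable (fun q : E3 × (E3 × E3) => g q.1) := hgm.comp measurable_fst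
    fun_prop
  have hin : ∀ p : E3 × E3, ∫⁻ ν, ENNReal.ofReal (g ν) *
      (ENNReal.ofReal (|inner ℝ ν (p.1 - p.2)|) * ENNReal.ofReal (Kc p)) =
      ENNReal.ofReal (Real.pi * ‖p.1 - p.2‖) * ENNReal.ofReal (Kc p) := by
    intro p
    rw [← gauss_inner, ← lintegral_mul_const _ (by fun_prop)]
    congr 1
    ext ν
    rw [← mul_assoc, ← ENNReal.ofReal_mul (by positivity)]
    congr 2
    simp only [hg]; ring
  have hdiag : ∀ᵐ p : E3 × E3, p.1 ≠ p.2 := by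
    rw [ae_iff]
    simp only [not_not, ne_eq]
    have hm : MeasurableSet {p : E3 × E3 | p.1 = p.2} := measurableSet_eq_fun measurable_fst measurable_snd
    rw [Measure.volume_eq_prod, Measure.measure_prod_null hm]
    refine Eventually.of_forall fun x => ?_
    have : Prod.mk x ⁻¹' {p : E3 × E3 | p.1 = p.2} = {x} := by
      ext y; simp [eq_comm]
    simp [this]
  have low : ∫⁻ ν, ENNReal.ofReal (g ν) * ∫⁻ p in Ω ×ˢ Ω, ENNReal.ofReal (|inner ℝ ν (p.1 - p.2)|) *
      ENNReal.ofReal (Kc p) = ENNReal.ofReal (Real.pi * (vol Ω * vol Ω)) := by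
    calc _ = ∫⁻ ν, ∫⁻ p in Ω ×ˢ Ω, ENNReal.ofReal (g ν) * (ENNReal.ofReal (|inner ℝ ν (p.1 - p.2)|) *
            ENNReal.ofReal (Kc p)) := by
          congr 1
          ext ν
          rw [lintegral_const_mul']
          exact ENNReal.ofReal_ne_top
      _ = ∫⁻ p in Ω ×ˢ Ω, ∫⁻ ν, ENNReal.ofReal (g ν) * (ENNReal.ofReal (|inner ℝ ν (p.1 - p.2)|) *
            ENNReal.ofReal (Kc p)) := lintegral_lintegral_swap hF.aemeasurable
      _ = ∫⁻ p in Ω ×ˢ Ω, ENNReal.ofReal Real.pi := by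
          apply lintegral_congr_ae
          filter_upwards [ae_restrict_of_ae hdiag] with p hp
          rw [hin, ← ENNReal.ofReal_mul (by positivity)]
          have : ‖p.1 - p.2‖ ≠ 0 := norm_ne_zero_iff.2 (sub_ne_zero.2 hp)
          congr 1
          unfold Kc
          field_simp
      _ = _ := by
          rw [setLIntegral_const, Measure.volume_eq_prod, Measure.prod_prod,
            ENNReal.ofReal_mul hpi.le, ENNReal.ofReal_mul hv.le]
          simp only [vol, ENNReal.ofReal_toReal hΩf.ne]
  rw [low, ENNReal.ofReal_le_ofReal_iff (by positivity)] at up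
  have h1 : Real.pi * vol Ω * vol Ω ≤
      Real.pi * vol Ω * (8 + 16 * Real.pi * ρ * (Metric.diam Λ)^3) := by
    rw [hM] at up
    linarith
  exact le_of_mul_le_mul_left h1 (by positivity)

end
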